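/- Let k be a perfect field of characteristic p. If ω ∈ Ω¹_{k(x)} satisfies C(ω) = ω, then ω is a finite sum of logarithmic differentials with coefficients in 𝔽_p: ω = ∑ c_i · dg_i/g_i with c_i ∈ 𝔽_p and g_i ∈ k(x)ˣ. In particular, every pole of ω is simple with residue in the prime field. -/

import Mathlib

/-- Coefficients of `(D + t f)^n (1)` as a polynomial in `t`. -/
def cartCoef {k K : Type*} [Field k] [Field K] [Algebra k K] (D : Derivation k K K) (f : K) :
    ℕ → ℕ → K
  | 0, 0 => 1
  | 0, _ + 1 => 0
  | n + 1, 0 => D (cartCoef D f n 0)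
  | n + 1, i + 1 => D (cartCoef D f n (i + 1)) + f * cartCoef D f n i

section
variable {k K : Type*} [Field k] [Field K] [Algebra k K] (D : Derivation k K K) (f : K)

lemma cartCoef_gt (n : ℕ) : ∀ i, n < i → cartCoef D f n i = 0 := by
  induction n with
  | zero => intro i hi; cases i with
    | zero => omega
    | succ i => simp [cartCoef]
  | succ n ih => intro i hi; cases i with
    | zero => omega
    | succ i => simp [cartCoef, ih (i + 1) (by omega), ih i (by omega)]

lemma cartCoef_diag (n : ℕ) : cartCoef D f n n = f ^ n := by
  induction n with
  | zero => simp [cartCoef]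
  | succ n ih => simp [cartCoef, ih, cartCoef_gt D f n (n + 1) (by omega), pow_succ']

lemma cartCoef_zero (n : ℕ) : cartCoef D f (n + 1) 0 = 0 := by
  induction n with
  | zero => simp [cartCoef]
  | succ n ih => rw [cartCoef, ih, map_zero]

lemma cartCoef_sum (n : ℕ) :
    (fun y => D y + f * y)^[n] 1 = ∑ i ∈ Finset.range (n + 1), cartCoef D f n i := by
  induction n with
  | zero => simp [cartCoef]
  | succ n ih =>
    rw [Function.iterate_succ_apply', ih,
      Finset.sum_range_succ' (fun i => cartCoef D f (n + 1) i)]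
    simp only [cartCoef, Finset.sum_add_distrib]
    rw [Finset.sum_range_succ (fun i => D (cartCoef D f n (i + 1))),
      cartCoef_gt D f n (n + 1) (by omega), map_zero, map_sum, Finset.mul_sum,
      Finset.sum_range_succ' (fun i => D (cartCoef D f n i))]
    ring

lemma cartCoef_key (n : ℕ) : ∀ i, ((i + 1 : ℕ) : K) * cartCoef D f n (i + 1) =
    ∑ j ∈ Finset.range n, (n.choose (j + 1) : K) * (D^[j] f * cartCoef D f (n - 1 - j) i) := by
  induction n with
  | zero => intro i; simp [cartCoef]
  | succ n ih =>
    intro i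
    have h1 : ((i + 1 : ℕ) : K) * cartCoef D f (n + 1) (i + 1) =
        D (((i + 1 : ℕ) : K) * cartCoef D f n (i + 1)) + f * cartCoef D f n i
          + f * ((i : K) * cartCoef D f n i) := by
      simp only [cartCoef, Derivation.leibniz, Derivation.map_natCast, smul_eq_mul]
      push_cast
      ring
    have h2 : D (((i + 1 : ℕ) : K) * cartCoef D f n (i + 1)) + f * ((i : K) * cartCoef D f n i)
        = ∑ j ∈ Finset.range n, (n.choose (j + 1) : K) *
          (D^[j + 1] f * cartCoef D f (n - 1 - j) i + D^[j] f * cartCoef D f (n - j) i) := by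
      have e : ∀ j ∈ Finset.range n, n - j = (n - 1 - j) + 1 := by
        intro j hj; rw [Finset.mem_range] at hj; omega
      rw [ih, map_sum]
      cases i with
      | zero =>
        simp only [Nat.cast_zero, zero_mul, mul_zero, add_zero]
        refine Finset.sum_congr rfl fun j hj => ?_
        rw [e j hj, Function.iterate_succ_apply']
        simp only [cartCoef, Derivation.leibniz, Derivation.map_natCast, smul_eq_mul]
        ring
      | succ i =>
        rw [ih, Finset.mul_sum, ← Finset.sum_add_distrib]
        refine Finset.sum_congr rfl fun j hj => ?_
        rw [e j hj, Function.iterate_succ_apply']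
        simp only [cartCoef, Derivation.leibniz, Derivation.map_natCast, smul_eq_mul]
        ring
    rw [h1, add_right_comm, h2]
    simp only [Nat.choose_succ_succ' n, Nat.cast_add, add_mul, mul_add, Finset.sum_add_distrib]
    rw [Finset.sum_range_succ', Finset.sum_range_succ (fun j => (n.choose (j + 1) : K) * _)]
    simp only [Nat.choose_succ_self, Nat.cast_zero, zero_mul, add_zero, Nat.choose_zero_right,
      Nat.cast_one, one_mul, Function.iterate_zero, id, Nat.add_sub_cancel, Nat.sub_zero]
    have e : ∀ j, n - 1 - j = n - (j + 1) := by intro j; omega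
    simp only [e]
    ring

lemma cart_jacobson (p : ℕ) (hp : p.Prime) [CharP K p] :
    (fun y => D y + f * y)^[p] 1 = D^[p - 1] f + f ^ p := by
  have h2 := hp.two_le
  have key : ∀ i, ((i + 1 : ℕ) : K) * cartCoef D f p (i + 1) =
      D^[p - 1] f * cartCoef D f 0 i := by
    intro i
    rw [cartCoef_key, Finset.sum_eq_single (p - 1)]
    · rw [Nat.sub_add_cancel hp.one_le]; simp
    · intro j hj hne
      rw [Finset.mem_range] at hj
      have : ((p.choose (j + 1) : ℕ) : K) = 0 :=
        (CharP.cast_eq_zero_iff K p _).2 (hp.dvd_choose_self (by omega) (by omega))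
      rw [this, zero_mul]
    · intro h; simp at h; omega
  obtain ⟨m, rfl⟩ : ∃ m, p = m + 2 := ⟨p - 2, by omega⟩
  rw [cartCoef_sum, Finset.sum_range_succ, cartCoef_diag, Finset.sum_range_succ',
    cartCoef_zero, Finset.sum_range_succ', Finset.sum_eq_zero]
  · have := key 0
    simp [cartCoef] at this ⊢
    rw [this]
  · intro i hi
    rw [Finset.mem_range] at hi
    have := key (i + 1)
    simp only [cartCoef, mul_zero] at this
    refine (mul_eq_zero.1 this).resolve_left ?_
    intro h0
    have := Nat.le_of_dvd (by omega) ((CharP.cast_eq_zero_iff K (m + 2) _).1 h0)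
    omega

lemma cart_exists (p : ℕ) (hp : p.Prime) [CharP K p] (h : D^[p - 1] f + f ^ p = 0) :
    ∃ y : K, y ≠ 0 ∧ D y + f * y = 0 := by
  have hex : ∃ n, (fun y => D y + f * y)^[n] 1 = 0 := ⟨p, by rw [cart_jacobson D f p hp, h]⟩
  classical
  have h0 := Nat.find_spec hex
  cases hn : Nat.find hex with
  | zero => rw [hn] at h0; simp at h0
  | succ n =>
    rw [hn, Function.iterate_succ_apply'] at h0
    exact ⟨_, Nat.find_min hex (m := n) (by omega), h0⟩

lemma cart_iter_mul (p : ℕ) [CharP K p] (u w : K) (n : ℕ) :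
    D^[n] (u ^ p * w) = u ^ p * D^[n] w := by
  induction n with
  | zero => rfl
  | succ n ih =>
    rw [Function.iterate_succ_apply', ih, Function.iterate_succ_apply', Derivation.leibniz,
      Derivation.leibniz_pow]
    simp

lemma cart_iter_X (X : K) (hX : D X = 1) (n : ℕ) :
    ∀ i, D^[n] (X ^ i) = (i.descFactorial n : K) * X ^ (i - n) := by
  induction n with
  | zero => intro i; simp
  | succ n ih =>
    intro i
    rw [Function.iterate_succ_apply', ih, Derivation.leibniz, Derivation.leibniz_pow, hX,
      Nat.descFactorial_succ, Derivation.map_natCast]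
    simp [Nat.sub_sub]
    ring

end

/-- With the same identification of differential forms over `k(x)`
with their coefficients and the Cartier operator `C` as an additive map with
`C(f^p·ω) = f·C(ω)`, `C(x^{p−1}dx) = dx`, `C(x^i dx) = 0` for `i < p − 1`:
any `ω` fixed by `C` is a finite `𝔽_p`-linear combination of logarithmic
differentials `dg/g`. -/
theorem cartier_fixed_is_logarithmic (p : ℕ) (hp : p.Prime) (k : Type*)
    [Field k] [CharP k p] [PerfectField k]
    (D : Derivation k (RatFunc k) (RatFunc k)) (hD : D RatFunc.X = 1)
    (C : RatFunc k →+ RatFunc k)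
    (hCmul : ∀ f ω : RatFunc k, C (f ^ p * ω) = f * C ω)
    (hCtop : C (RatFunc.X ^ (p - 1)) = 1)
    (hClow : ∀ i : ℕ, i < p - 1 → C (RatFunc.X ^ i) = 0) :
    ∀ ω : RatFunc k, C ω = ω →
      ∃ (n : ℕ) (c : Fin n → ZMod p) (g : Fin n → RatFunc k),
        (∀ i, g i ≠ 0) ∧
        ω = ∑ i, ((c i).val : RatFunc k) * (D (g i) / g i) := by
 
  intro ω hω
  have : Fact p.Prime := ⟨hp⟩
  have : CharP (RatFunc k) p := charP_of_injective_algebraMap (algebraMap k (RatFunc k)).injective p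
  have : ExpChar k p := ExpChar.prime hp
  have : ExpChar (RatFunc k) p := ExpChar.prime hp
  have hadd : ∀ f g : RatFunc k, D^[p - 1] f = -(C f) ^ p → D^[p - 1] g = -(C g) ^ p →
      D^[p - 1] (f + g) = -(C (f + g)) ^ p := by
    intro f g hf hg
    rw [iterate_map_add, hf, hg, map_add, add_pow_char]
    ring
  have hmul : ∀ u f : RatFunc k, D^[p - 1] f = -(C f) ^ p →
      D^[p - 1] (u ^ p * f) = -(C (u ^ p * f)) ^ p := by
    intro u f hf
    rw [cart_iter_mul, hf, hCmul]
    ring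
  have hX : ∀ i, i < p → D^[p - 1] (RatFunc.X ^ i) = -(C (RatFunc.X ^ i)) ^ p := by
    intro i hi
    rw [cart_iter_X D _ hD]
    rcases Nat.lt_or_ge i (p - 1) with h | h
    · rw [hClow i h, Nat.descFactorial_eq_zero_iff_lt.2 h]
      simp [hp.ne_zero]
    · obtain rfl : i = p - 1 := by omega
      rw [hCtop, Nat.descFactorial_self]
      have := ZMod.wilsons_lemma p
      have h2 := congrArg (ZMod.castHom (dvd_refl p) (RatFunc k)) this
      simp only [map_natCast, map_neg, map_one] at h2
      rw [h2]; simp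
  have hpoly : ∀ q : Polynomial k, D^[p - 1] (algebraMap _ (RatFunc k) q)
      = -(C (algebraMap _ (RatFunc k) q)) ^ p := by
    intro q
    induction q using Polynomial.induction_on' with
    | add a b ha hb => rw [map_add]; exact hadd _ _ ha hb
    | monomial n a =>
      have : PerfectRing k p := PerfectField.toPerfectRing p
      obtain ⟨b, rfl⟩ := surjective_frobenius k p a
      have : algebraMap _ (RatFunc k) (Polynomial.monomial n (frobenius k p b)) =
          (RatFunc.C b * RatFunc.X ^ (n / p)) ^ p * RatFunc.X ^ (n % p) := by
        rw [← Polynomial.C_mul_X_pow_eq_monomial, frobenius_def]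
        conv_lhs => rw [← Nat.div_add_mod n p]
        simp only [map_mul, map_pow, RatFunc.algebraMap_X, RatFunc.algebraMap_C]
        ring
      rw [this]
      exact hmul _ _ (hX _ (Nat.mod_lt _ hp.pos))
  have hall : ∀ f : RatFunc k, D^[p - 1] f = -(C f) ^ p := by
    intro f
    obtain ⟨a, b, hb, rfl⟩ := IsFractionRing.div_surjective (A := Polynomial k) f
    have hb' : algebraMap _ (RatFunc k) b ≠ 0 :=
      IsFractionRing.to_map_ne_zero_of_mem_nonZeroDivisors hb
    have : algebraMap _ (RatFunc k) a / algebraMap _ (RatFunc k) b =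
        ((algebraMap _ (RatFunc k) b)⁻¹) ^ p * algebraMap _ (RatFunc k) (a * b ^ (p - 1)) := by
      obtain ⟨m, rfl⟩ : ∃ m, p = m + 1 := ⟨p - 1, by have := hp.pos; omega⟩
      rw [map_mul, map_pow, Nat.add_sub_cancel, inv_pow]
      field_simp
      ring
    rw [this]
    exact hmul _ _ (hpoly _)
  obtain ⟨y, hy, hDy⟩ := cart_exists D ω p hp (by rw [hall, hω]; ring)
  refine ⟨1, fun _ => 1, fun _ => y⁻¹, fun _ => inv_ne_zero hy, ?_⟩
  have h1 : D y = - (ω * y) := eq_neg_of_add_eq_zero_left hDy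
  have : Fact (1 < p) := ⟨hp.one_lt⟩
  simp [ZMod.val_one, Derivation.leibniz_inv, h1]
  field_simp
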